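/- Let n ≥ 1, assume the hypotheses under which Q̃_n : ℓ²_{w'} → ℓ²_w is Hilbert–Schmidt and D_n Q̃_n = I, and assume h^{(n)} ∈ ℓ²_w. Define Q_n g = Q̃_n g − ((Q̃_n g)(0)/∏_{i=0}^{n−1} β(i)) · h^{(n)} and C_n f = (f(0)/∏_{i=0}^{n−1} β(i)) · h^{(n)}. Then Q_n : ℓ²_{w'} → ℓ²_w is a Hilbert–Schmidt operator satisfying D_n Q_n g = g for all g ∈ ℓ²_{w'} and Q_n D_n f = f − C_n f for all f ∈ dom(D_n), where C_n is a rank-one Hilbert–Schmidt operator on ℓ²_w; hence Q_n is a compact parametrix for D_n. -/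

import Mathlib

/-- The difference operator `D_n` on sequences. -/
noncomputable def Dn (β μ : ℕ → ℂ) (n : ℕ) (f : ℕ → ℂ) (k : ℕ) : ℂ :=
  β (k + n) * f k - β k * (μ (k + 1) / μ k) * f (k + 1)

/-- The formal kernel vector `h^{(n)}(k) = (∏_{i=0}^{n-1} β(k+i)) / μ(k)`. -/
noncomputable def hker (β μ : ℕ → ℂ) (n : ℕ) (k : ℕ) : ℂ :=
  (∏ i ∈ Finset.range n, β (k + i)) / μ k

/-- The integral kernel of the operator `Q̃_n`. -/
noncomputable def Qker (β μ : ℕ → ℂ) (n : ℕ) (k j : ℕ) : ℂ :=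
  (∏ i ∈ Finset.range n, β (k + i)) / (∏ i ∈ Finset.range (n + 1), β (j + i)) *
    (μ j / μ k)

/-- The operator `Q̃_n`: `(Q̃_n g)(k) = Σ_{j=k}^∞ K_n(k,j) g(j)`. -/
noncomputable def Qtilde (β μ : ℕ → ℂ) (n : ℕ) (g : ℕ → ℂ) (k : ℕ) : ℂ :=
  ∑' j : ℕ, if k ≤ j then Qker β μ n k j * g j else 0

/-- The corrected parametrix `Q_n g = Q̃_n g − ((Q̃_n g)(0)/∏_{i<n} β(i)) h^{(n)}`. -/
noncomputable def Qcorr (β μ : ℕ → ℂ) (n : ℕ) (g : ℕ → ℂ) (k : ℕ) : ℂ :=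
  Qtilde β μ n g k - Qtilde β μ n g 0 / (∏ i ∈ Finset.range n, β i) * hker β μ n k

/-- The rank-one operator `C_n f = (f(0)/∏_{i<n} β(i)) h^{(n)}`. -/
noncomputable def Cop (β μ : ℕ → ℂ) (n : ℕ) (f : ℕ → ℂ) (k : ℕ) : ℂ :=
  f 0 / (∏ i ∈ Finset.range n, β i) * hker β μ n k

/-- The integral kernel of the corrected parametrix `Q_n`. -/
noncomputable def Qcorrker (β μ : ℕ → ℂ) (n : ℕ) (k j : ℕ) : ℂ :=
  (if k ≤ j then Qker β μ n k j else 0) -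
    Qker β μ n 0 j / (∏ i ∈ Finset.range n, β i) * hker β μ n k

/-- Membership in the weighted space `ℓ²_w`: `Σ_k w(k) |f(k)|² < ∞`. -/
def MemL2 (w : ℕ → ℝ) (f : ℕ → ℂ) : Prop :=
  Summable fun k => w k * ‖f k‖ ^ 2

/-! With `h = h^{(n)}` and `a(j) = μ(j) / ∏_{i=0}^{n} β(j+i)`, the kernel of `Q̃_n` factors as
`h(k) a(j)` for `k ≤ j`, and `a` is an integrating factor:
`a(k) (D_n f)(k) = (f/h)(k) - (f/h)(k+1)`. Subtracting the multiple of `h` that makes `Q_n g` vanish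
at `0` turns the tail sums defining `Q̃_n` into finite ones,
`(Q_n g)(k) = -h(k) ∑_{j<k} a(j) g(j)`, so `D_n Q_n = I` and `Q_n D_n = I - C_n` are the two
telescoping identities for partial sums. The kernel of `Q_n` is dominated by the product kernel
`h(k) a(j)`, which is Hilbert–Schmidt once `h ∈ ℓ²_w` and `a` lies in `ℓ²_{1/w'}`, the dual of
`ℓ²_{w'}`. -/

section WeightedL2

variable {w : ℕ → ℝ} {f g : ℕ → ℂ}

lemma MemL2.of_norm_le_mul (hw : ∀ k, 0 ≤ w k) (hf : MemL2 w f) (C : ℝ)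
    (hgf : ∀ k, ‖g k‖ ≤ C * ‖f k‖) : MemL2 w g := by
  refine Summable.of_nonneg_of_le (fun k => mul_nonneg (hw k) (sq_nonneg _)) (fun k => ?_)
    (Summable.mul_left (C ^ 2) hf)
  calc w k * ‖g k‖ ^ 2 ≤ w k * (C * ‖f k‖) ^ 2 :=
        mul_le_mul_of_nonneg_left (pow_le_pow_left₀ (norm_nonneg _) (hgf k) 2) (hw k)
    _ = C ^ 2 * (w k * ‖f k‖ ^ 2) := by ring

lemma MemL2.const_mul (hf : MemL2 w f) (t : ℂ) : MemL2 w fun k => t * f k :=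
  (Summable.mul_left (‖t‖ ^ 2) hf).congr fun k => by rw [norm_mul]; ring

lemma MemL2.summable_norm_mul (hw : ∀ k, 0 < w k) (hf : MemL2 w⁻¹ f) (hg : MemL2 w g) :
    Summable fun k => ‖f k * g k‖ := by
  refine Summable.of_nonneg_of_le (fun k => norm_nonneg _) (fun k => ?_)
    ((Summable.add hf hg).div_const 2)
  have hsqrt : √(w k) ≠ 0 := (Real.sqrt_pos.2 (hw k)).ne'
  have amgm := two_mul_le_add_sq ((√(w k))⁻¹ * ‖f k‖) (√(w k) * ‖g k‖)
  rw [mul_pow, mul_pow, inv_pow, Real.sq_sqrt (hw k).le, ← mul_assoc 2, mul_assoc, mul_assoc,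
    mul_left_comm ‖f k‖, inv_mul_cancel_left₀ hsqrt, ← norm_mul] at amgm
  rw [Pi.inv_apply]
  linarith

end WeightedL2

/-- The integrating factor `a(j) = μ(j) / ∏_{i=0}^{n} β(j+i)` of `D_n`: multiplication by `a`
turns `D_n f` into the negative forward difference of `f / h^{(n)}`. -/
noncomputable def integratingFactor (β μ : ℕ → ℂ) (n j : ℕ) : ℂ :=
  μ j / ∏ i ∈ Finset.range (n + 1), β (j + i)

section Kernel

variable {β μ : ℕ → ℂ}

lemma hker_ne_zero (hβ : ∀ k, β k ≠ 0) (hμ : ∀ k, μ k ≠ 0) (n k : ℕ) : hker β μ n k ≠ 0 :=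
  div_ne_zero (Finset.prod_ne_zero_iff.2 fun _ _ => hβ _) (hμ k)

lemma hker_zero (hμ0 : μ 0 = 1) (n : ℕ) : hker β μ n 0 = ∏ i ∈ Finset.range n, β i := by
  simp [hker, hμ0]

lemma integratingFactor_ne_zero (hβ : ∀ k, β k ≠ 0) (hμ : ∀ k, μ k ≠ 0) (n j : ℕ) :
    integratingFactor β μ n j ≠ 0 :=
  div_ne_zero (hμ j) (Finset.prod_ne_zero_iff.2 fun _ _ => hβ _)

lemma Qker_eq_hker_mul_integratingFactor (n k j : ℕ) :
    Qker β μ n k j = hker β μ n k * integratingFactor β μ n j := by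
  unfold Qker hker integratingFactor
  ring

lemma integratingFactor_mul_eq_inv_hker (hβ : ∀ k, β k ≠ 0) (n k : ℕ) :
    integratingFactor β μ n k * β (k + n) = (hker β μ n k)⁻¹ := by
  rw [integratingFactor, hker, Finset.prod_range_succ, inv_div, div_mul_eq_mul_div,
    mul_div_mul_right _ _ (hβ (k + n))]

lemma integratingFactor_mul_eq_inv_hker_succ (hβ : ∀ k, β k ≠ 0) (hμ : ∀ k, μ k ≠ 0) (n k : ℕ) :
    integratingFactor β μ n k * (β k * (μ (k + 1) / μ k)) = (hker β μ n (k + 1))⁻¹ := by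
  have hprod : ∏ i ∈ Finset.range (n + 1), β (k + i) =
      (∏ i ∈ Finset.range n, β (k + 1 + i)) * β k := by
    simp only [Finset.prod_range_succ', add_zero, add_assoc, add_comm 1]
  have hβk := hβ k
  have hμk := hμ k
  rw [integratingFactor, hker, hprod, inv_div]
  field_simp

lemma integratingFactor_mul_Dn (hβ : ∀ k, β k ≠ 0) (hμ : ∀ k, μ k ≠ 0) (n : ℕ) (f : ℕ → ℂ)
    (k : ℕ) : integratingFactor β μ n k * Dn β μ n f k =
      f k / hker β μ n k - f (k + 1) / hker β μ n (k + 1) := by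
  rw [div_eq_mul_inv, div_eq_mul_inv, ← integratingFactor_mul_eq_inv_hker hβ,
    ← integratingFactor_mul_eq_inv_hker_succ hβ hμ, Dn]
  ring

lemma Qcorrker_eq_ite (hβ : ∀ k, β k ≠ 0) (hμ : ∀ k, μ k ≠ 0) (hμ0 : μ 0 = 1) (n k j : ℕ) :
    Qcorrker β μ n k j =
      if j < k then -(hker β μ n k * integratingFactor β μ n j) else 0 := by
  rw [Qcorrker, Qker_eq_hker_mul_integratingFactor, Qker_eq_hker_mul_integratingFactor,
    ← hker_zero hμ0, mul_div_cancel_left₀ _ (hker_ne_zero hβ hμ n 0)]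
  rcases lt_or_ge j k with hjk | hkj
  · rw [if_neg hjk.not_ge, if_pos hjk]
    ring
  · rw [if_pos hkj, if_neg hkj.not_gt]
    ring

lemma norm_Qcorrker_le (hβ : ∀ k, β k ≠ 0) (hμ : ∀ k, μ k ≠ 0) (hμ0 : μ 0 = 1) (n k j : ℕ) :
    ‖Qcorrker β μ n k j‖ ≤ ‖hker β μ n k‖ * ‖integratingFactor β μ n j‖ := by
  rw [Qcorrker_eq_ite hβ hμ hμ0]
  split_ifs
  · rw [norm_neg, norm_mul]
  · rw [norm_zero]
    positivity

lemma norm_Qker_le {M c : ℝ} (hc : 0 < c) (hβlow : ∀ k : ℕ, c * (1 + k) ≤ ‖β k‖) {n k j : ℕ}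
    (hM : ‖∏ i ∈ Finset.range n, β (k + i)‖ ≤ M * ‖∏ i ∈ Finset.range n, β (j + i)‖) :
    ‖Qker β μ n k j‖ ≤ M / c * (((j : ℝ) + 1)⁻¹ * ‖μ j / μ k‖) := by
  have hβpos (l : ℕ) : 0 < ‖β l‖ := lt_of_lt_of_le (by positivity) (hβlow l)
  have hratio : ‖∏ i ∈ Finset.range n, β (k + i)‖ / ‖∏ i ∈ Finset.range n, β (j + i)‖ ≤ M := by
    rwa [div_le_iff₀]
    exact norm_pos_iff.2 (Finset.prod_ne_zero_iff.2 fun i _ => norm_pos_iff.1 (hβpos _))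
  have hM0 : 0 ≤ M := le_trans (by positivity) hratio
  have hlow : c * ((j : ℝ) + 1) ≤ ‖β (j + n)‖ :=
    calc c * ((j : ℝ) + 1) ≤ c * (1 + ((j + n : ℕ) : ℝ)) := by
          push_cast
          gcongr c * ?_
          linarith [n.cast_nonneg (α := ℝ)]
      _ ≤ ‖β (j + n)‖ := hβlow (j + n)
  calc ‖Qker β μ n k j‖
      = ‖∏ i ∈ Finset.range n, β (k + i)‖ / ‖∏ i ∈ Finset.range n, β (j + i)‖ *
          ‖β (j + n)‖⁻¹ * ‖μ j / μ k‖ := by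
        rw [Qker, Finset.prod_range_succ, norm_mul, norm_div, norm_mul, ← div_div, div_eq_mul_inv]
    _ ≤ M * (c * ((j : ℝ) + 1))⁻¹ * ‖μ j / μ k‖ := by gcongr
    _ = M / c * (((j : ℝ) + 1)⁻¹ * ‖μ j / μ k‖) := by
        rw [mul_inv]
        ring

lemma memL2_inv_Qker_zero {w w' : ℕ → ℝ} (hw0 : w 0 ≠ 0) (hw' : ∀ j, 0 ≤ w' j) {M c : ℝ}
    (hc : 0 < c) (hβlow : ∀ k : ℕ, c * (1 + k) ≤ ‖β k‖) {n : ℕ}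
    (hM : ∀ j, ‖∏ i ∈ Finset.range n, β i‖ ≤ M * ‖∏ i ∈ Finset.range n, β (j + i)‖)
    (hsum : Summable fun p : ℕ × ℕ =>
      ((max p.2 p.1 : ℝ) + 1)⁻¹ ^ 2 * ‖μ p.2 / μ p.1‖ ^ 2 * (w p.1 / w' p.2)) :
    MemL2 w'⁻¹ (Qker β μ n 0) := by
  have hnorm (j : ℕ) : ‖(j : ℂ) + 1‖ = (j : ℝ) + 1 := by
    exact_mod_cast Complex.norm_natCast (j + 1)
  have hmajorant : MemL2 w'⁻¹ fun j => ((j : ℂ) + 1)⁻¹ * (μ j / μ 0) := by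
    refine ((hsum.comp_injective (Prod.mk_right_injective (0 : ℕ))).div_const (w 0)).congr
      fun j => ?_
    simp only [Function.comp_apply, Nat.cast_zero, max_eq_left j.cast_nonneg, Pi.inv_apply,
      norm_mul, norm_inv, hnorm]
    field_simp
  refine hmajorant.of_norm_le_mul (fun j => inv_nonneg.2 (hw' j)) (M / c) fun j => ?_
  rw [norm_mul, norm_inv, hnorm]
  exact norm_Qker_le hc hβlow (by simpa only [zero_add] using hM j)

lemma memL2_integratingFactor {v : ℕ → ℝ} (hβ : ∀ k, β k ≠ 0) (hμ : ∀ k, μ k ≠ 0) {n k : ℕ}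
    (hrow : MemL2 v (Qker β μ n k)) : MemL2 v (integratingFactor β μ n) := by
  have hfactor : integratingFactor β μ n = fun j => (hker β μ n k)⁻¹ * Qker β μ n k j := by
    ext j
    rw [Qker_eq_hker_mul_integratingFactor, inv_mul_cancel_left₀ (hker_ne_zero hβ hμ n k)]
  exact hfactor ▸ hrow.const_mul _

end Kernel

section Parametrix

variable {β μ : ℕ → ℂ} {n : ℕ} {g : ℕ → ℂ}

lemma Qcorr_eq_tsum_Qcorrker (hs : Summable fun j => integratingFactor β μ n j * g j) (k : ℕ) :
    Qcorr β μ n g k = ∑' j, Qcorrker β μ n k j * g j := by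
  have hterms (m : ℕ) : Summable fun j => if m ≤ j then Qker β μ n m j * g j else 0 :=
    ((hs.mul_left (hker β μ n m)).indicator {j | m ≤ j}).congr fun j => by
      simp only [Set.indicator_apply, Set.mem_ofPred_eq, Qker_eq_hker_mul_integratingFactor,
        mul_assoc]
  rw [Qcorr, Qtilde, Qtilde, div_mul_eq_mul_div, mul_div_assoc, ← tsum_mul_right,
    ← (hterms k).tsum_sub ((hterms 0).mul_right _)]
  refine tsum_congr fun j => ?_
  rw [Qcorrker, if_pos j.zero_le, sub_mul, ite_mul, zero_mul]
  ring

lemma Qcorr_eq_neg_hker_mul_sum (hβ : ∀ k, β k ≠ 0) (hμ : ∀ k, μ k ≠ 0) (hμ0 : μ 0 = 1)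
    (hs : Summable fun j => integratingFactor β μ n j * g j) (k : ℕ) :
    Qcorr β μ n g k =
      -(hker β μ n k * ∑ j ∈ Finset.range k, integratingFactor β μ n j * g j) := by
  rw [Qcorr_eq_tsum_Qcorrker hs, tsum_eq_sum (s := Finset.range k), Finset.mul_sum,
    ← Finset.sum_neg_distrib]
  · refine Finset.sum_congr rfl fun j hj => ?_
    rw [Qcorrker_eq_ite hβ hμ hμ0, if_pos (Finset.mem_range.1 hj)]
    ring
  · intro j hj
    rw [Qcorrker_eq_ite hβ hμ hμ0, if_neg (mt Finset.mem_range.2 hj), zero_mul]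

lemma Dn_Qcorr (hβ : ∀ k, β k ≠ 0) (hμ : ∀ k, μ k ≠ 0) (hμ0 : μ 0 = 1)
    (hs : Summable fun j => integratingFactor β μ n j * g j) (k : ℕ) :
    Dn β μ n (Qcorr β μ n g) k = g k := by
  have hquot (m : ℕ) : Qcorr β μ n g m / hker β μ n m =
      -∑ j ∈ Finset.range m, integratingFactor β μ n j * g j := by
    rw [Qcorr_eq_neg_hker_mul_sum hβ hμ hμ0 hs, neg_div,
      mul_div_cancel_left₀ _ (hker_ne_zero hβ hμ n m)]
  apply mul_left_cancel₀ (integratingFactor_ne_zero hβ hμ n k)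
  rw [integratingFactor_mul_Dn hβ hμ, hquot, hquot, Finset.sum_range_succ]
  ring

lemma Qcorr_Dn (hβ : ∀ k, β k ≠ 0) (hμ : ∀ k, μ k ≠ 0) (hμ0 : μ 0 = 1) {f : ℕ → ℂ}
    (hs : Summable fun j => integratingFactor β μ n j * Dn β μ n f j) (k : ℕ) :
    Qcorr β μ n (Dn β μ n f) k = f k - Cop β μ n f k := by
  have hne := hker_ne_zero hβ hμ n k
  rw [Qcorr_eq_neg_hker_mul_sum hβ hμ hμ0 hs,
    Finset.sum_congr rfl fun j _ => integratingFactor_mul_Dn hβ hμ n f j,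
    Finset.sum_range_sub' fun j => f j / hker β μ n j, Cop, ← hker_zero hμ0]
  field_simp
  ring

lemma memL2_Qcorr (hβ : ∀ k, β k ≠ 0) (hμ : ∀ k, μ k ≠ 0) (hμ0 : μ 0 = 1) {w : ℕ → ℝ}
    (hw : ∀ k, 0 ≤ w k) (hh : MemL2 w (hker β μ n))
    (hs : Summable fun j => ‖integratingFactor β μ n j * g j‖) : MemL2 w (Qcorr β μ n g) := by
  refine hh.of_norm_le_mul hw (∑' j, ‖integratingFactor β μ n j * g j‖) fun k => ?_
  rw [Qcorr_eq_neg_hker_mul_sum hβ hμ hμ0 hs.of_norm, norm_neg, norm_mul, mul_comm]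
  gcongr
  exact (norm_sum_le _ _).trans (hs.sum_le_tsum _ fun _ _ => norm_nonneg _)

lemma summable_norm_Qcorrker_sq (hβ : ∀ k, β k ≠ 0) (hμ : ∀ k, μ k ≠ 0) (hμ0 : μ 0 = 1)
    {w w' : ℕ → ℝ} (hw : ∀ k, 0 ≤ w k) (hw' : ∀ j, 0 ≤ w' j) (hh : MemL2 w (hker β μ n))
    (ha : MemL2 w'⁻¹ (integratingFactor β μ n)) :
    Summable fun p : ℕ × ℕ => ‖Qcorrker β μ n p.1 p.2‖ ^ 2 * (w p.1 / w' p.2) := by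
  have hprod := Summable.mul_of_nonneg hh ha (fun k => mul_nonneg (hw k) (sq_nonneg _))
    fun j => mul_nonneg (inv_nonneg.2 (hw' j)) (sq_nonneg _)
  have hweight (p : ℕ × ℕ) : 0 ≤ w p.1 / w' p.2 := div_nonneg (hw _) (hw' _)
  refine hprod.of_nonneg_of_le (fun p => mul_nonneg (sq_nonneg _) (hweight p)) fun p => ?_
  calc ‖Qcorrker β μ n p.1 p.2‖ ^ 2 * (w p.1 / w' p.2)
      ≤ (‖hker β μ n p.1‖ * ‖integratingFactor β μ n p.2‖) ^ 2 * (w p.1 / w' p.2) :=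
        mul_le_mul_of_nonneg_right
          (pow_le_pow_left₀ (norm_nonneg _) (norm_Qcorrker_le hβ hμ hμ0 n p.1 p.2) 2) (hweight p)
    _ = w p.1 * ‖hker β μ n p.1‖ ^ 2 * (w'⁻¹ p.2 * ‖integratingFactor β μ n p.2‖ ^ 2) := by
        rw [Pi.inv_apply]
        ring

end Parametrix

theorem statement8_general (w w' : ℕ → ℝ) (hw : ∀ k, 0 < w k) (hw' : ∀ k, 0 < w' k)
    (β μ : ℕ → ℂ) (hβ : ∀ k, β k ≠ 0) (hμ : ∀ k, μ k ≠ 0) (hμ0 : μ 0 = 1) (n : ℕ)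
    (hh : MemL2 w (hker β μ n))
    -- by duality, `g ↦ (Q̃_n g)(0)` is a bounded functional on `ℓ²_{w'}`:
    (hrow : MemL2 w'⁻¹ (Qker β μ n 0)) :
    (Summable fun p : ℕ × ℕ => ‖Qcorrker β μ n p.1 p.2‖ ^ 2 * (w p.1 / w' p.2)) ∧
    (∀ g : ℕ → ℂ, MemL2 w' g →
      MemL2 w (Qcorr β μ n g) ∧ ∀ k : ℕ, Dn β μ n (Qcorr β μ n g) k = g k) ∧
    (∀ f : ℕ → ℂ, MemL2 w' (Dn β μ n f) →
      ∀ k : ℕ, Qcorr β μ n (Dn β μ n f) k = f k - Cop β μ n f k) ∧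
    (∀ f : ℕ → ℂ, ∃ t : ℂ, Cop β μ n f = t • hker β μ n) ∧
    (∀ f : ℕ → ℂ, MemL2 w (Cop β μ n f)) ∧
    (Summable fun k : ℕ =>
      w k * ‖hker β μ n k / (∏ i ∈ Finset.range n, β i)‖ ^ 2 / w 0) := by
  have ha : MemL2 w'⁻¹ (integratingFactor β μ n) := memL2_integratingFactor hβ hμ hrow
  have hpair {g : ℕ → ℂ} (hg : MemL2 w' g) : Summable fun j => ‖integratingFactor β μ n j * g j‖ :=
    ha.summable_norm_mul hw' hg
  refine ⟨summable_norm_Qcorrker_sq hβ hμ hμ0 (fun k => (hw k).le) (fun j => (hw' j).le) hh ha,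
    fun g hg => ⟨memL2_Qcorr hβ hμ hμ0 (fun k => (hw k).le) hh (hpair hg),
      Dn_Qcorr hβ hμ hμ0 (hpair hg).of_norm⟩,
    fun f hDf => Qcorr_Dn hβ hμ hμ0 (hpair hDf).of_norm,
    fun f => ⟨_, rfl⟩, fun f => hh.const_mul _, ?_⟩
  simpa only [div_eq_inv_mul] using (hh.const_mul (∏ i ∈ Finset.range n, β i)⁻¹).div_const (w 0)

/-- for `n ≥ 1`, under the hypotheses making `Q̃_n` Hilbert–Schmidt
with `D_n Q̃_n = I`, and assuming `h^{(n)} ∈ ℓ²_w`, the corrected operator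
`Q_n g = Q̃_n g − ((Q̃_n g)(0)/∏_{i<n} β(i)) h^{(n)}` is a Hilbert–Schmidt operator
`ℓ²_{w'} → ℓ²_w` satisfying `D_n Q_n g = g` for all `g ∈ ℓ²_{w'}` and
`Q_n D_n f = f − C_n f` for all `f ∈ dom(D_n)`, where `C_n f = (f(0)/∏ β) h^{(n)}`
is a rank-one Hilbert–Schmidt operator on `ℓ²_w`; hence `Q_n` is a compact
parametrix for `D_n`. -/
theorem statement8 (w w' : ℕ → ℝ) (hw : ∀ k, 0 < w k) (hw' : ∀ k, 0 < w' k)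
    (β μ : ℕ → ℂ) (hβ : ∀ k, β k ≠ 0) (hμ : ∀ k, μ k ≠ 0) (hμ0 : μ 0 = 1)
    (M c : ℝ) (hc : 0 < c)
    (hM : ∀ k j m : ℕ, k ≤ j →
      ‖∏ i ∈ Finset.range (m + 1), β (k + i)‖ ≤
        M * ‖∏ i ∈ Finset.range (m + 1), β (j + i)‖)
    (hβlow : ∀ k : ℕ, c * (1 + k) ≤ ‖β k‖)
    (hsum : Summable fun p : ℕ × ℕ =>
      ((max p.2 p.1 : ℝ) + 1)⁻¹ ^ 2 * ‖μ p.2 / μ p.1‖ ^ 2 * (w p.1 / w' p.2))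
    (n : ℕ) (hn : 1 ≤ n) (hh : MemL2 w (hker β μ n)) :
    -- `Q_n` is Hilbert–Schmidt from `ℓ²_{w'}` to `ℓ²_w`:
    (Summable fun p : ℕ × ℕ => ‖Qcorrker β μ n p.1 p.2‖ ^ 2 * (w p.1 / w' p.2)) ∧
    -- `D_n Q_n = I` on `ℓ²_{w'}`:
    (∀ g : ℕ → ℂ, MemL2 w' g →
      MemL2 w (Qcorr β μ n g) ∧ ∀ k : ℕ, Dn β μ n (Qcorr β μ n g) k = g k) ∧
    -- `Q_n D_n = I − C_n` on the maximal domain: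
    (∀ f : ℕ → ℂ, MemL2 w f → MemL2 w' (Dn β μ n f) →
      ∀ k : ℕ, Qcorr β μ n (Dn β μ n f) k = f k - Cop β μ n f k) ∧
    -- `C_n` is a rank-one operator on `ℓ²_w` (with Hilbert–Schmidt kernel):
    (∀ f : ℕ → ℂ, ∃ t : ℂ, Cop β μ n f = t • hker β μ n) ∧
    (∀ f : ℕ → ℂ, MemL2 w f → MemL2 w (Cop β μ n f)) ∧
    (Summable fun k : ℕ =>
      w k * ‖hker β μ n k / (∏ i ∈ Finset.range n, β i)‖ ^ 2 / w 0) := by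
  have hM0 (j : ℕ) : ‖∏ i ∈ Finset.range n, β i‖ ≤ M * ‖∏ i ∈ Finset.range n, β (j + i)‖ := by
    simpa only [zero_add, Nat.sub_add_cancel hn] using hM 0 j (n - 1) j.zero_le
  obtain ⟨hHS, hright, hleft, hrank, hC, hCHS⟩ := statement8_general w w' hw hw' β μ hβ hμ hμ0 n hh
    (memL2_inv_Qker_zero (hw 0).ne' (fun j => (hw' j).le) hc hβlow hM0 hsum)
  exact ⟨hHS, hright, fun f _ => hleft f, hrank, fun f _ => hC f, hCHS⟩
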